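/- arXiv:2109.06575 — 4 statements merged into one kernel-verified Lean document; each statement's English description precedes it below -/
import Mathlib

section
/- Let μ be a finite measure on a measurable space X, N a positive integer, and s₁, …, s_N : X → ℂ measurable functions such that ρ := N^{−1} ∑_{i=1}^N |s_i|² is strictly positive μ-almost everywhere. Then each function s_i·conj(s_j)/ρ is μ-integrable, the N×N complex matrix G with entries G_{ij} = ∫_X s_i·conj(s_j)·ρ^{−1} dμ is positive semidefinite Hermitian with trace G = N·μ(X), and det G ≤ μ(X)^N. -/
open MeasureTheory Matrix
open scoped ComplexOrder

/-- The Gram matrix of functions `s i` weighted by the inverse Bergman density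
`ρ = N⁻¹ ∑ |sᵢ|²` is positive semidefinite Hermitian, has trace `N·μ(X)` and
determinant at most `μ(X)^N`. -/
theorem gram_matrix_weighted_by_bergman_density
    {X : Type*} [MeasurableSpace X] (μ : Measure X) [IsFiniteMeasure μ]
    (N : ℕ) (hN : 0 < N) (s : Fin N → X → ℂ) (hs : ∀ i, Measurable (s i))
    (ρ : X → ℝ) (hρ : ρ = fun x => (N : ℝ)⁻¹ * ∑ i, ‖s i x‖ ^ 2)
    (hpos : ∀ᵐ x ∂μ, 0 < ρ x)
    (G : Matrix (Fin N) (Fin N) ℂ)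
    (hG : G = Matrix.of fun i j =>
      ∫ x, s i x * (starRingEnd ℂ) (s j x) / (ρ x : ℂ) ∂μ) :
    (∀ i j, Integrable (fun x => s i x * (starRingEnd ℂ) (s j x) / (ρ x : ℂ)) μ) ∧
    G.PosSemidef ∧
    G.trace = (N : ℂ) * ((μ Set.univ).toReal : ℂ) ∧
    ∃ d : ℝ, G.det = (d : ℂ) ∧ d ≤ (μ Set.univ).toReal ^ N := by
  have hN' : (0 : ℝ) < N := by exact_mod_cast hN
  have hρm : Measurable ρ := by
    rw [hρ]
    fun_prop
  have hsum : ∀ x, ∑ i, ‖s i x‖ ^ 2 = N * ρ x := by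
    intro x
    rw [hρ]
    field_simp
  have hint : ∀ i j, Integrable (fun x => s i x * (starRingEnd ℂ) (s j x) / (ρ x : ℂ)) μ := by
    intro i j
    refine Integrable.of_bound (C := (N : ℝ)) ?_ ?_
    · have h1 := hs i
      have h2 : Measurable fun x => (starRingEnd ℂ) (s j x) :=
        Complex.continuous_conj.measurable.comp (hs j)
      exact ((h1.mul h2).div (Complex.measurable_ofReal.comp hρm)).aestronglyMeasurable
    · filter_upwards [hpos] with x hx
      rw [norm_div, norm_mul, RCLike.norm_conj, Complex.norm_real, Real.norm_of_nonneg hx.le,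
        div_le_iff₀ hx, ← hsum x]
      have hi : ‖s i x‖ ^ 2 ≤ ∑ i, ‖s i x‖ ^ 2 :=
        Finset.single_le_sum (f := fun i => ‖s i x‖ ^ 2) (fun _ _ => by positivity)
          (Finset.mem_univ i)
      have hj : ‖s j x‖ ^ 2 ≤ ∑ i, ‖s i x‖ ^ 2 :=
        Finset.single_le_sum (f := fun i => ‖s i x‖ ^ 2) (fun _ _ => by positivity)
          (Finset.mem_univ j)
      nlinarith [sq_nonneg (‖s i x‖ - ‖s j x‖)]
  have hherm : G.IsHermitian := by
    ext i j
    rw [hG, Matrix.conjTranspose_apply, Matrix.of_apply, Matrix.of_apply]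
    change (starRingEnd ℂ) _ = _
    rw [← integral_conj]
    congr 1
    ext x
    simp [mul_comm]
  have hpsd : G.PosSemidef := by
    refine Matrix.PosSemidef.of_dotProduct_mulVec_nonneg hherm fun v => ?_
    have key : star v ⬝ᵥ G *ᵥ v =
        ∫ x, ((‖∑ i, (starRingEnd ℂ) (v i) * s i x‖ ^ 2 / ρ x : ℝ) : ℂ) ∂μ := by
      have h1 : ∀ x, ((‖∑ i, (starRingEnd ℂ) (v i) * s i x‖ ^ 2 / ρ x : ℝ) : ℂ) =
          ∑ i, ∑ j, ((starRingEnd ℂ) (v i) * v j) *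
            (s i x * (starRingEnd ℂ) (s j x) / (ρ x : ℂ)) := by
        intro x
        push_cast
        rw [← Complex.mul_conj', map_sum, Finset.sum_mul_sum, Finset.sum_div]
        refine Finset.sum_congr rfl fun i _ => ?_
        rw [Finset.sum_div]
        refine Finset.sum_congr rfl fun j _ => ?_
        simp only [map_mul, Complex.conj_conj]
        ring
      simp_rw [h1]
      rw [integral_finsetSum _ fun i _ => integrable_finsetSum _ fun j _ =>
        (hint i j).const_mul _]
      simp only [dotProduct, Matrix.mulVec]
      refine Finset.sum_congr rfl fun i _ => ?_
      rw [integral_finsetSum _ fun j _ => (hint i j).const_mul _, Finset.mul_sum]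
      refine Finset.sum_congr rfl fun j _ => ?_
      rw [integral_const_mul, hG, Matrix.of_apply, Pi.star_apply]
      change (starRingEnd ℂ) (v i) * _ = _
      ring
    rw [key, integral_complex_ofReal]
    have : 0 ≤ ∫ x, (‖∑ i, (starRingEnd ℂ) (v i) * s i x‖ ^ 2 / ρ x : ℝ) ∂μ := by
      refine integral_nonneg_of_ae ?_
      filter_upwards [hpos] with x hx
      simp only [Pi.zero_apply]
      positivity
    exact_mod_cast this
  have htr : G.trace = (N : ℂ) * ((μ Set.univ).toReal : ℂ) := by
    rw [hG, Matrix.trace]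
    simp only [Matrix.diag_apply, Matrix.of_apply]
    rw [← integral_finsetSum _ fun i _ => hint i i]
    have : ∀ᵐ x ∂μ, ∑ i, s i x * (starRingEnd ℂ) (s i x) / (ρ x : ℂ) = (N : ℂ) := by
      filter_upwards [hpos] with x hx
      have hx' : (ρ x : ℂ) ≠ 0 := by exact_mod_cast hx.ne'
      rw [← Finset.sum_div, div_eq_iff hx']
      simp_rw [Complex.mul_conj']
      exact_mod_cast hsum x
    rw [integral_congr_ae this, integral_const, Measure.real, Complex.real_smul, mul_comm]
  refine ⟨hint, hpsd, htr, ∏ i, hherm.eigenvalues i, ?_, ?_⟩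
  · rw [hherm.det_eq_prod_eigenvalues]
    push_cast
    rfl
  · have hsumE : ∑ i, hherm.eigenvalues i = N * (μ Set.univ).toReal := by
      have h := hherm.trace_eq_sum_eigenvalues
      rw [htr] at h
      have h2 : ((∑ i, hherm.eigenvalues i : ℝ) : ℂ) = ((N * (μ Set.univ).toReal : ℝ) : ℂ) := by
        push_cast
        exact h.symm
      exact_mod_cast h2
    have hnn : ∀ i, 0 ≤ hherm.eigenvalues i := hpsd.eigenvalues_nonneg
    have am := Real.geom_mean_le_arith_mean_weighted Finset.univ (fun _ : Fin N => (N : ℝ)⁻¹)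
      hherm.eigenvalues (fun _ _ => by positivity) (by simp [hN'.ne']) (fun i _ => hnn i)
    rw [← Finset.mul_sum, hsumE, inv_mul_cancel_left₀ hN'.ne'] at am
    have h3 := pow_le_pow_left₀ (Finset.prod_nonneg fun i _ => Real.rpow_nonneg (hnn i) _) am N
    rw [← Finset.prod_pow] at h3
    refine le_trans (le_of_eq ?_) h3
    refine Finset.prod_congr rfl fun i _ => ?_
    rw [Real.rpow_inv_natCast_pow (hnn i) hN.ne']
end

section
/- Let μ₀ be a measure on a measurable space X, let γ > 0 and k > 0 be real numbers, N a positive integer, f₁, …, f_N : X → ℂ measurable, and u, v : X → ℝ measurable. Assume that the measure ν := exp(−(γu + (1−γ)v))·μ₀ is a probability measure, that each function f_i·conj(f_j)·exp(−ku) is ν-integrable, and that the N×N Gram matrix G with entries G_{ij} = ∫_X f_i·conj(f_j)·exp(−ku) dν has det G > 0. Then ∫_{X^N} |det[(f_i(x_j))_{i,j}]|^{−2γ/k} · exp(−(1−γ)(v(x₁)+⋯+v(x_N))) dμ₀^{⊗N} ≥ (N! · det G)^{−γ/k}. -/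
open MeasureTheory ENNReal Matrix


/-- Jensen's inequality for `t ↦ t ^ (-p)` on `[0, ∞]`. -/
lemma jensen_neg_rpow {Ω : Type*} [MeasurableSpace Ω] (P : Measure Ω) [IsProbabilityMeasure P]
    (g : Ω → ℝ≥0∞) (hg : Measurable g) (hgt : ∀ x, g x ≠ ∞) (p : ℝ) (hp : 0 < p)
    (h0 : ∫⁻ x, g x ∂P ≠ 0) (ht : ∫⁻ x, g x ∂P ≠ ∞) :
    (∫⁻ x, g x ∂P) ^ (-p) ≤ ∫⁻ x, g x ^ (-p) ∂P := by
  by_cases hinf : ∫⁻ x, g x ^ (-p) ∂P = ∞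
  · rw [hinf]; exact le_top
  have hae : ∀ᵐ x ∂P, g x ^ (-p) < ∞ := ae_lt_top (hg.pow_const _) hinf
  have hp1 : 0 < 1 + p := by linarith
  have hol := ENNReal.lintegral_mul_norm_pow_le (μ := P) (f := g) (g := fun x => g x ^ (-p))
    hg.aemeasurable (hg.pow_const _).aemeasurable (p := p / (1 + p)) (q := 1 / (1 + p))
    (by positivity) (by positivity) (by field_simp; ring)
  have h1 : ∫⁻ x, g x ^ (p / (1 + p)) * (g x ^ (-p)) ^ (1 / (1 + p)) ∂P = 1 := by
    rw [lintegral_congr_ae (g := fun _ => 1)]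
    · simp
    · filter_upwards [hae] with x hx
      have hx0 : g x ≠ 0 := by
        intro h
        rw [h, ENNReal.zero_rpow_of_neg (by linarith)] at hx
        exact absurd hx (lt_irrefl _)
      rw [← ENNReal.rpow_mul, ← ENNReal.rpow_add _ _ hx0 (hgt x)]
      have : p / (1 + p) + -p * (1 / (1 + p)) = 0 := by ring
      rw [this, ENNReal.rpow_zero]
  rw [h1] at hol
  have h2 := ENNReal.rpow_le_rpow hol hp1.le
  rw [ENNReal.one_rpow, ENNReal.mul_rpow_of_nonneg _ _ hp1.le, ← ENNReal.rpow_mul,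
    ← ENNReal.rpow_mul, div_mul_cancel₀ _ hp1.ne', div_mul_cancel₀ _ hp1.ne',
    ENNReal.rpow_one] at h2
  rw [ENNReal.rpow_neg]
  have h3 : (∫⁻ x, g x ∂P) ^ p ≠ 0 := by
    simp [ENNReal.rpow_eq_zero_iff, h0, ht]
  have h4 : (∫⁻ x, g x ∂P) ^ p ≠ ∞ := ENNReal.rpow_ne_top_of_nonneg hp.le ht
  rw [ENNReal.inv_le_iff_le_mul (fun _ => h3) (fun h => absurd h h4)]
  exact h2

lemma pi_withDensity_aux {X : Type*} [MeasurableSpace X] (ν : Measure X) [IsProbabilityMeasure ν]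
    (w : X → ℝ≥0∞) (hw : Measurable w) [SigmaFinite (ν.withDensity w)] (N : ℕ) :
    (Measure.pi fun _ : Fin N => ν.withDensity w) =
      (Measure.pi fun _ : Fin N => ν).withDensity (fun x => ∏ j, w (x j)) := by
  symm
  symm
  refine Measure.pi_eq ?_
  intro s hs
  rw [withDensity_apply _ (MeasurableSet.univ_pi hs), ← lintegral_indicator (MeasurableSet.univ_pi hs)]
  have h1 : (Set.univ.pi s).indicator (fun x : Fin N → X => ∏ j, w (x j)) =
      fun x => ∏ j, (s j).indicator w (x j) := by
    funext x
    by_cases hx : x ∈ Set.univ.pi s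
    · rw [Set.indicator_of_mem hx]
      refine Finset.prod_congr rfl fun j _ => ?_
      rw [Set.indicator_of_mem (hx j (Set.mem_univ j))]
    · rw [Set.indicator_of_notMem hx]
      simp only [Set.mem_pi, Set.mem_univ, true_implies, not_forall] at hx
      obtain ⟨j, hj⟩ := hx
      exact (Finset.prod_eq_zero (Finset.mem_univ j) (Set.indicator_of_notMem hj _)).symm
  rw [h1]
  have hind : ProbabilityTheory.iIndepFun (fun (j : Fin N) (x : Fin N → X) => (s j).indicator w (x j))
      (Measure.pi fun _ : Fin N => ν) :=
    ProbabilityTheory.iIndepFun_pi (μ := fun _ : Fin N => ν)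
      (X := fun j => (s j).indicator w) (fun j => (hw.indicator (hs j)).aemeasurable)
  rw [ProbabilityTheory.lintegral_prod_eq_prod_lintegral_of_indepFun _ _ hind
    (fun j => (hw.indicator (hs j)).comp (measurable_pi_apply j))]
  refine Finset.prod_congr rfl fun j _ => ?_
  rw [withDensity_apply _ (hs j), ← lintegral_indicator (hs j)]
  exact (measurePreserving_eval (fun _ : Fin N => ν) j).lintegral_comp (hw.indicator (hs j))

lemma det_expand {X : Type*} (N : ℕ) (f : Fin N → X → ℂ) (e : X → ℝ) (x : Fin N → X) :
    ((‖(Matrix.of fun i j => f i (x j)).det‖ ^ 2 * ∏ j, e (x j) : ℝ) : ℂ) =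
    ∑ τ : Equiv.Perm (Fin N), ∑ σ : Equiv.Perm (Fin N),
      (((Equiv.Perm.sign τ : ℤ) : ℂ) * ((Equiv.Perm.sign σ : ℤ) : ℂ)) *
      ∏ j, (f (σ j) (x j) * (starRingEnd ℂ) (f (τ j) (x j)) * (e (x j) : ℂ)) := by
  push_cast
  rw [← Complex.mul_conj', Matrix.det_apply', map_sum, Finset.sum_mul_sum, Finset.sum_mul,
    Finset.sum_comm]
  simp only [Finset.sum_mul]
  rw [Finset.sum_comm]
  rw [Finset.sum_comm]
  refine Finset.sum_congr rfl fun τ _ => Finset.sum_congr rfl fun σ _ => ?_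
  simp only [Matrix.of_apply, map_mul, map_prod, map_intCast, Finset.prod_mul_distrib]
  ring

/-- Andréief identity. -/
lemma andreief {X : Type*} [MeasurableSpace X] (ν : Measure X) [IsProbabilityMeasure ν]
    (N : ℕ) (f : Fin N → X → ℂ) (e : X → ℝ)
    (hint : ∀ i j, Integrable (fun x => f i x * (starRingEnd ℂ) (f j x) * (e x : ℂ)) ν)
    (G : Matrix (Fin N) (Fin N) ℂ)
    (hG : G = Matrix.of fun i j => ∫ x, f i x * (starRingEnd ℂ) (f j x) * (e x : ℂ) ∂ν) :
    Integrable (fun x : Fin N → X => ‖(Matrix.of fun i j => f i (x j)).det‖ ^ 2 * ∏ j, e (x j))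
      (Measure.pi fun _ => ν) ∧
    ∫ x : Fin N → X, ‖(Matrix.of fun i j => f i (x j)).det‖ ^ 2 * ∏ j, e (x j)
      ∂(Measure.pi fun _ => ν) = N.factorial * G.det.re := by
  have hI : ∀ τ σ : Equiv.Perm (Fin N), Integrable (fun x : Fin N → X =>
      (((Equiv.Perm.sign τ : ℤ) : ℂ) * ((Equiv.Perm.sign σ : ℤ) : ℂ)) *
      ∏ j, (f (σ j) (x j) * (starRingEnd ℂ) (f (τ j) (x j)) * (e (x j) : ℂ)))
      (Measure.pi fun _ => ν) := fun τ σ =>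
    (Integrable.fintype_prod (μ := fun _ : Fin N => ν)
      (f := fun j y => f (σ j) y * (starRingEnd ℂ) (f (τ j) y) * (e y : ℂ))
      (fun j => hint _ _)).const_mul _
  have hC : Integrable (fun x : Fin N → X =>
      ((‖(Matrix.of fun i j => f i (x j)).det‖ ^ 2 * ∏ j, e (x j) : ℝ) : ℂ))
      (Measure.pi fun _ => ν) := by
    simp only [det_expand]
    exact integrable_finsetSum _ fun τ _ => integrable_finsetSum _ fun σ _ => hI τ σ
  have hval : ∫ x : Fin N → X,
      ((‖(Matrix.of fun i j => f i (x j)).det‖ ^ 2 * ∏ j, e (x j) : ℝ) : ℂ)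
      ∂(Measure.pi fun _ => ν) = N.factorial * G.det := by
    simp only [det_expand]
    rw [integral_finsetSum _ fun τ _ => integrable_finsetSum _ fun σ _ => hI τ σ]
    have : ∀ τ : Equiv.Perm (Fin N), ∫ x : Fin N → X, ∑ σ : Equiv.Perm (Fin N),
      (((Equiv.Perm.sign τ : ℤ) : ℂ) * ((Equiv.Perm.sign σ : ℤ) : ℂ)) *
      ∏ j, (f (σ j) (x j) * (starRingEnd ℂ) (f (τ j) (x j)) * (e (x j) : ℂ))
        ∂(Measure.pi fun _ => ν) = G.det := by
      intro τ
      rw [integral_finsetSum _ fun σ _ => hI τ σ]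
      have h1 : (G.submatrix id τ).det = ((Equiv.Perm.sign τ : ℤ) : ℂ) * G.det :=
        Matrix.det_permute' τ G
      have h2 : ((Equiv.Perm.sign τ : ℤ) : ℂ) * ((Equiv.Perm.sign τ : ℤ) : ℂ) = 1 := by
        rw [← Int.cast_mul, ← Units.val_mul, Int.units_mul_self]; simp
      have h3 : G.det = ((Equiv.Perm.sign τ : ℤ) : ℂ) * (G.submatrix id τ).det := by
        rw [h1, ← mul_assoc, h2, one_mul]
      rw [h3, Matrix.det_apply', Finset.mul_sum]
      refine Finset.sum_congr rfl fun σ _ => ?_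
      rw [integral_const_mul, integral_fintype_prod_eq_prod (μ := fun _ : Fin N => ν)
        (fun j y => f (σ j) y * (starRingEnd ℂ) (f (τ j) y) * (e y : ℂ)), mul_assoc]
      simp [hG]
    rw [Finset.sum_congr rfl fun τ _ => this τ]
    simp [Fintype.card_perm]
  refine ⟨hC.re, ?_⟩
  rw [integral_complex_ofReal] at hval
  have := congrArg Complex.re hval
  have h5 : ((N.factorial : ℂ) * G.det).re = N.factorial * G.det.re := by
    rw [Complex.mul_re]; simp
  rw [h5] at this
  exact_mod_cast this

/-- Key inequality (trivialized form of Proposition 2.2): the partition-function type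
integral over `X^N` is bounded below by `(N! · det G)^(-γ/k)`, where `G` is the Gram
matrix of the `fᵢ` weighted by `e^{-ku}` with respect to the probability measure
`ν = e^{-(γu+(1-γ)v)} μ₀`. -/
theorem partition_function_ge_gram_det_rpow
    {X : Type*} [MeasurableSpace X] (μ₀ : Measure X)
    (γ k : ℝ) (hγ : 0 < γ) (hk : 0 < k)
    (N : ℕ) (hN : 0 < N)
    (f : Fin N → X → ℂ) (hf : ∀ i, Measurable (f i))
    (u v : X → ℝ) (hu : Measurable u) (hv : Measurable v)
    (ν : Measure X)
    (hν : ν = μ₀.withDensity fun x =>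
      ENNReal.ofReal (Real.exp (-(γ * u x + (1 - γ) * v x))))
    (hprob : IsProbabilityMeasure ν)
    (hint : ∀ i j, Integrable
      (fun x => f i x * (starRingEnd ℂ) (f j x) * (Real.exp (-(k * u x)) : ℂ)) ν)
    (G : Matrix (Fin N) (Fin N) ℂ)
    (hG : G = Matrix.of fun i j =>
      ∫ x, f i x * (starRingEnd ℂ) (f j x) * (Real.exp (-(k * u x)) : ℂ) ∂ν)
    (hdet_re : 0 < G.det.re) (hdet_im : G.det.im = 0) :
    (ENNReal.ofReal ((Nat.factorial N : ℝ) * G.det.re)) ^ (-(γ / k)) ≤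
      ∫⁻ x : Fin N → X,
        (‖(Matrix.of fun i j => f i (x j)).det‖₊ : ℝ≥0∞) ^ (-(2 * γ / k)) *
          ENNReal.ofReal (Real.exp (-(1 - γ) * ∑ j, v (x j)))
        ∂(Measure.pi fun _ : Fin N => μ₀) := by
  have hρm : Measurable fun x => ENNReal.ofReal (Real.exp (-(γ * u x + (1 - γ) * v x))) := by
    fun_prop
  set w : X → ℝ≥0∞ := fun x => ENNReal.ofReal (Real.exp (γ * u x + (1 - γ) * v x)) with hw
  have hwm : Measurable w := by fun_prop
  have hμ : μ₀ = ν.withDensity w := by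
    rw [hν, ← withDensity_mul _ hρm hwm]
    have : ((fun x => ENNReal.ofReal (Real.exp (-(γ * u x + (1 - γ) * v x)))) * w) = 1 := by
      funext x
      simp only [Pi.mul_apply, hw, Pi.one_apply]
      rw [← ENNReal.ofReal_mul (Real.exp_nonneg _), ← Real.exp_add]
      simp
    rw [this, withDensity_one]
  have hsf : SigmaFinite (ν.withDensity w) :=
    SigmaFinite.withDensity_of_ne_top (Filter.Eventually.of_forall fun x => ENNReal.ofReal_ne_top)
  have hdm : Measurable fun x : Fin N → X => (Matrix.of fun i j => f i (x j)).det := by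
    simp only [Matrix.det_apply', Matrix.of_apply]
    fun_prop
  obtain ⟨hgi, hgv⟩ := andreief ν N f (fun x => Real.exp (-(k * u x))) hint G hG
  set g : (Fin N → X) → ℝ := fun x =>
    ‖(Matrix.of fun i j => f i (x j)).det‖ ^ 2 * ∏ j, Real.exp (-(k * u (x j))) with hg
  have hgm : Measurable g := by
    have := hdm.norm
    fun_prop
  have hg0 : ∀ x, 0 ≤ g x := fun x => by positivity
  have hlin : ∫⁻ x, ENNReal.ofReal (g x) ∂(Measure.pi fun _ : Fin N => ν) =
      ENNReal.ofReal ((Nat.factorial N : ℝ) * G.det.re) := by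
    rw [← hgv, ofReal_integral_eq_lintegral_ofReal hgi (Filter.Eventually.of_forall hg0)]
  have hpos : 0 < (Nat.factorial N : ℝ) * G.det.re :=
    mul_pos (by exact_mod_cast N.factorial_pos) hdet_re
  have hJ := jensen_neg_rpow (Measure.pi fun _ : Fin N => ν) (fun x => ENNReal.ofReal (g x))
    hgm.ennreal_ofReal (fun x => ENNReal.ofReal_ne_top) (γ / k) (div_pos hγ hk)
    (by rw [hlin]; exact (ENNReal.ofReal_pos.2 hpos).ne') (by rw [hlin]; exact ENNReal.ofReal_ne_top)
  rw [hlin] at hJ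
  refine hJ.trans (le_of_eq ?_)
  have hWm : Measurable fun x : Fin N → X => ∏ j, w (x j) := by fun_prop
  have hFm : Measurable fun x : Fin N → X =>
      (‖(Matrix.of fun i j => f i (x j)).det‖₊ : ℝ≥0∞) ^ (-(2 * γ / k)) *
          ENNReal.ofReal (Real.exp (-(1 - γ) * ∑ j, v (x j))) := by
    have := hdm.nnnorm
    fun_prop
  rw [hμ, pi_withDensity_aux ν w hwm N, lintegral_withDensity_eq_lintegral_mul _ hWm hFm]
  refine lintegral_congr fun x => ?_
  simp only [Pi.mul_apply, hw, hg]
  rw [← ENNReal.ofReal_prod_of_nonneg (fun _ _ => Real.exp_nonneg _), ← Real.exp_sum,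
    ← Real.exp_sum, ENNReal.ofReal_mul (by positivity), ENNReal.ofReal_pow (norm_nonneg _),
    ENNReal.mul_rpow_of_ne_top (by simp) ENNReal.ofReal_ne_top,
    ENNReal.ofReal_rpow_of_pos (Real.exp_pos _), ← Real.exp_mul, mul_left_comm,
    ← ENNReal.ofReal_mul (Real.exp_nonneg _), ← Real.exp_add, ofReal_norm, ← enorm_eq_nnnorm,
    ← ENNReal.rpow_natCast, ← ENNReal.rpow_mul]
  have e1 : ((2 : ℕ) : ℝ) * (-(γ / k)) = -(2 * γ / k) := by push_cast; ring
  have e2 : (∑ j, -(k * u (x j))) * -(γ / k) =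
      ∑ j, (γ * u (x j) + (1 - γ) * v (x j)) + -(1 - γ) * ∑ j, v (x j) := by
    rw [Finset.sum_add_distrib, Finset.sum_neg_distrib, ← Finset.mul_sum, ← Finset.mul_sum,
      ← Finset.mul_sum]
    field_simp
    ring
  rw [e1, e2]
end

section
/- Let μ₀ be a measure on a measurable space X, let γ > 0 and k > 0 be real numbers, N a positive integer, f₁, …, f_N : X → ℂ measurable, and u, v : X → ℝ measurable such that the measure ν := exp(−(γu + (1−γ)v))·μ₀ is a nonzero finite measure and each f_i·conj(f_j)·exp(−ku) is ν-integrable. Assume the N×N Gram matrix G with entries G_{ij} = ∫_X f_i·conj(f_j)·exp(−ku) dν is positive definite, and let C be an invertible N×N complex matrix with C·G·Cᴴ = Id. Set g_i := ∑_l C_{il} f_l, assume ρ := N^{−1}∑_i |g_i|²·exp(−ku) is strictly positive μ₀-almost everywhere, and define u_G := u + k^{−1} log ρ. Then ∫_X exp(−(γ u_G + (1−γ)v)) dμ₀ ≥ ( ∫_X exp(−(γu + (1−γ)v)) dμ₀ )^{1+γ/k}. -/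
open MeasureTheory ENNReal Matrix
open scoped ComplexOrder

/-- Trivialized form of the first inequality of Proposition 3.1:
`∫ e^{-(γ u_G + (1-γ)v)} dμ₀ ≥ (∫ e^{-(γ u + (1-γ)v)} dμ₀)^{1+γ/k}`, where
`u_G = u + k⁻¹ log ρ` is the Fubini–Study potential of the Gram matrix `G`. -/
theorem fubini_study_potential_inequality
    {X : Type*} [MeasurableSpace X] (μ₀ : Measure X)
    (γ k : ℝ) (hγ : 0 < γ) (hk : 0 < k)
    (N : ℕ) (hN : 0 < N)
    (f : Fin N → X → ℂ) (hf : ∀ i, Measurable (f i))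
    (u v : X → ℝ) (hu : Measurable u) (hv : Measurable v)
    (ν : Measure X)
    (hν : ν = μ₀.withDensity fun x =>
      ENNReal.ofReal (Real.exp (-(γ * u x + (1 - γ) * v x))))
    (hν0 : ν ≠ 0) (hνfin : IsFiniteMeasure ν)
    (hint : ∀ i j, Integrable
      (fun x => f i x * (starRingEnd ℂ) (f j x) * (Real.exp (-(k * u x)) : ℂ)) ν)
    (G : Matrix (Fin N) (Fin N) ℂ)
    (hG : G = Matrix.of fun i j =>
      ∫ x, f i x * (starRingEnd ℂ) (f j x) * (Real.exp (-(k * u x)) : ℂ) ∂ν)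
    (hGpos : G.PosDef)
    (C : Matrix (Fin N) (Fin N) ℂ) (hC : IsUnit C.det) (hCG : C * G * Cᴴ = 1)
    (g : Fin N → X → ℂ) (hg : g = fun i x => ∑ l, C i l * f l x)
    (ρ : X → ℝ)
    (hρ : ρ = fun x => (N : ℝ)⁻¹ * (∑ i, ‖g i x‖ ^ 2) * Real.exp (-(k * u x)))
    (hρpos : ∀ᵐ x ∂μ₀, 0 < ρ x)
    (uG : X → ℝ) (huG : uG = fun x => u x + k⁻¹ * Real.log (ρ x)) :
    (∫⁻ x, ENNReal.ofReal (Real.exp (-(γ * u x + (1 - γ) * v x))) ∂μ₀) ^ (1 + γ / k)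
      ≤ ∫⁻ x, ENNReal.ofReal (Real.exp (-(γ * uG x + (1 - γ) * v x))) ∂μ₀ := by
  classical
  set w : X → ENNReal := fun x => ENNReal.ofReal (Real.exp (-(γ * u x + (1 - γ) * v x))) with hw
  have hwm : Measurable w := by
    simp only [hw]; fun_prop
  have hgm : ∀ i, Measurable (g i) := by
    intro i; rw [hg]; fun_prop
  have hρm : Measurable ρ := by
    rw [hρ]; fun_prop
  have hNR : (0 : ℝ) < N := by exact_mod_cast hN
  have hρ0 : ∀ x, 0 ≤ ρ x := by
    intro x; rw [hρ]; positivity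
  -- the expansion of `|g_i|^2 e^{-ku}`
  have hexp : ∀ i x, (((‖g i x‖ ^ 2 * Real.exp (-(k * u x)) : ℝ)) : ℂ) =
      ∑ l, ∑ m, C i l * (starRingEnd ℂ) (C i m) *
        (f l x * (starRingEnd ℂ) (f m x) * (Real.exp (-(k * u x)) : ℂ)) := by
    intro i x
    have h1 : ((‖g i x‖ : ℂ)) ^ 2 = g i x * (starRingEnd ℂ) (g i x) := by
      rw [Complex.mul_conj, Complex.normSq_eq_norm_sq]; push_cast; rfl
    rw [Complex.ofReal_mul, Complex.ofReal_pow, h1, hg]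
    simp only [map_sum, map_mul]
    rw [Finset.sum_mul_sum, Finset.sum_mul]
    refine Finset.sum_congr rfl fun l _ => ?_
    rw [Finset.sum_mul]
    refine Finset.sum_congr rfl fun m _ => ?_
    ring
  have hintC : ∀ i, Integrable
      (fun x => (((‖g i x‖ ^ 2 * Real.exp (-(k * u x)) : ℝ)) : ℂ)) ν := by
    intro i
    simp_rw [hexp]
    exact integrable_finsetSum _ fun l _ => integrable_finsetSum _ fun m _ =>
      (hint l m).const_mul _
  have hintR : ∀ i, Integrable (fun x => ‖g i x‖ ^ 2 * Real.exp (-(k * u x))) ν := by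
    intro i
    have := (hintC i).re
    simpa only [RCLike.re_eq_complex_re, Complex.ofReal_re] using this
  have hone : ∀ i, ∫ x, ‖g i x‖ ^ 2 * Real.exp (-(k * u x)) ∂ν = 1 := by
    intro i
    have h2 : (∫ x, (((‖g i x‖ ^ 2 * Real.exp (-(k * u x)) : ℝ)) : ℂ) ∂ν) = 1 := by
      simp_rw [hexp]
      rw [integral_finsetSum _ (fun l _ => integrable_finsetSum _ fun m _ =>
        (hint l m).const_mul _)]
      have h3 : (C * G * Cᴴ) i i = 1 := by rw [hCG]; simp
      rw [← h3, Matrix.mul_apply]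
      simp only [Matrix.mul_apply, Finset.sum_mul]
      conv_rhs => rw [Finset.sum_comm]
      refine Finset.sum_congr rfl fun l _ => ?_
      rw [integral_finsetSum _ (fun m _ => (hint l m).const_mul _)]
      refine Finset.sum_congr rfl fun m _ => ?_
      rw [integral_const_mul, hG, Matrix.of_apply, Matrix.conjTranspose_apply]
      simp only [starRingEnd_apply]
      ring
    rw [integral_complex_ofReal] at h2
    exact_mod_cast h2
  have hρeq : ρ = fun x => (N : ℝ)⁻¹ * ∑ i, ‖g i x‖ ^ 2 * Real.exp (-(k * u x)) := by
    rw [hρ]; funext x; rw [mul_assoc, Finset.sum_mul]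
  have hρint : Integrable ρ ν := by
    rw [hρeq]
    exact (integrable_finsetSum _ fun i _ => hintR i).const_mul _
  have hρone : ∫ x, ρ x ∂ν = 1 := by
    rw [hρeq, integral_const_mul, integral_finsetSum _ (fun i _ => hintR i)]
    simp only [hone]
    simp [hNR.ne']
  have hlone : ∫⁻ x, ENNReal.ofReal (ρ x) ∂ν = 1 := by
    rw [← ofReal_integral_eq_lintegral_ofReal hρint (ae_of_all _ hρ0), hρone]; simp
  have hρν : ∀ᵐ x ∂ν, 0 < ρ x := by
    rw [hν]; exact (withDensity_absolutelyContinuous μ₀ _) hρpos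
  set s := γ / k with hs
  have hspos : 0 < s := div_pos hγ hk
  have hRHS : ∫⁻ x, ENNReal.ofReal (Real.exp (-(γ * uG x + (1 - γ) * v x))) ∂μ₀
      = ∫⁻ x, ENNReal.ofReal (ρ x ^ (-s)) ∂ν := by
    rw [hν, lintegral_withDensity_eq_lintegral_mul _ hwm (by fun_prop)]
    refine lintegral_congr_ae ?_
    filter_upwards [hρpos] with x hx
    simp only [Pi.mul_apply, hw]
    rw [← ENNReal.ofReal_mul (Real.exp_nonneg _), Real.rpow_def_of_pos hx, ← Real.exp_add, huG]
    congr 2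
    simp only [hs]
    field_simp
    ring
  have hLHS : ∫⁻ x, w x ∂μ₀ = ∫⁻ x, 1 ∂ν := by
    rw [hν, lintegral_one, withDensity_apply _ MeasurableSet.univ, Measure.restrict_univ]
  have hH := ENNReal.lintegral_mul_norm_pow_le (μ := ν)
    (f := fun x => ENNReal.ofReal (ρ x)) (g := fun x => ENNReal.ofReal (ρ x ^ (-s)))
    (p := s / (1 + s)) (q := 1 / (1 + s)) (by fun_prop) (by fun_prop)
    (by positivity) (by positivity) (by field_simp; ring)
  rw [hlone, ENNReal.one_rpow, one_mul] at hH
  have hcongr : ∫⁻ x, ENNReal.ofReal (ρ x) ^ (s / (1 + s)) *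
      ENNReal.ofReal (ρ x ^ (-s)) ^ (1 / (1 + s)) ∂ν = ∫⁻ x, 1 ∂ν := by
    refine lintegral_congr_ae ?_
    filter_upwards [hρν] with x hx
    rw [ENNReal.ofReal_rpow_of_pos hx, ENNReal.ofReal_rpow_of_pos (Real.rpow_pos_of_pos hx _),
      ← ENNReal.ofReal_mul (by positivity), ← Real.rpow_mul hx.le, ← Real.rpow_add hx]
    have : s / (1 + s) + -s * (1 / (1 + s)) = 0 := by ring
    rw [this]; simp
  rw [hcongr] at hH
  rw [hRHS, hLHS]
  calc (∫⁻ x, 1 ∂ν) ^ (1 + s)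
      ≤ ((∫⁻ x, ENNReal.ofReal (ρ x ^ (-s)) ∂ν) ^ (1 / (1 + s))) ^ (1 + s) :=
        ENNReal.rpow_le_rpow hH (by positivity)
    _ = _ := by
        rw [← ENNReal.rpow_mul, one_div, inv_mul_cancel₀ (by positivity), ENNReal.rpow_one]
end

section
/- Let μ₀ be a measure on a measurable space X, let γ > 0 and k > 0 be real numbers, N a positive integer, f₁, …, f_N : X → ℂ measurable, and v : X → ℝ measurable. Let C be an invertible N×N complex matrix and set g_i := ∑_{l=1}^N C_{il} f_l. Assume ρ_g := N^{−1}∑_{i=1}^N |g_i|² is strictly positive μ₀-almost everywhere, set u_g := k^{−1} log ρ_g, and assume c := ∫_X exp(−(γ u_g + (1−γ)v)) dμ₀ < ∞. Then each function f_i·conj(f_j)·exp(−(k+γ)u_g − (1−γ)v) is μ₀-integrable and the N×N matrix G' with entries G'_{ij} = ∫_X f_i·conj(f_j)·exp(−(k+γ)u_g − (1−γ)v) dμ₀ satisfies det G' ≤ |det C|^{−2} · c^N. -/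
open MeasureTheory ENNReal Matrix
open scoped ComplexOrder

lemma aux_expand {X : Type*} {N : ℕ} (h : Fin N → X → ℂ) (w : X → ℂ) (a b : Fin N → ℂ) (x : X) :
    (∑ l, a l * h l x) * (starRingEnd ℂ) (∑ m, b m * h m x) * w x
      = ∑ l, ∑ m, a l * (starRingEnd ℂ) (b m) * (h l x * (starRingEnd ℂ) (h m x) * w x) := by
  rw [map_sum, Finset.sum_mul_sum, Finset.sum_mul]
  refine Finset.sum_congr rfl fun l _ => ?_
  rw [Finset.sum_mul]
  refine Finset.sum_congr rfl fun m _ => ?_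
  rw [map_mul]; ring

lemma aux_integrable {X : Type*} [MeasurableSpace X] (μ : Measure X) {N : ℕ}
    (h : Fin N → X → ℂ) (w : X → ℂ) (a b : Fin N → ℂ)
    (hI : ∀ i j, Integrable (fun x => h i x * (starRingEnd ℂ) (h j x) * w x) μ) :
    Integrable (fun x => (∑ l, a l * h l x) * (starRingEnd ℂ) (∑ m, b m * h m x) * w x) μ := by
  simp_rw [aux_expand]
  exact integrable_finsetSum _ fun l _ => integrable_finsetSum _ fun m _ => (hI l m).const_mul _

lemma aux_integral {X : Type*} [MeasurableSpace X] (μ : Measure X) {N : ℕ}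
    (h : Fin N → X → ℂ) (w : X → ℂ) (a b : Fin N → ℂ)
    (hI : ∀ i j, Integrable (fun x => h i x * (starRingEnd ℂ) (h j x) * w x) μ) :
    ∫ x, (∑ l, a l * h l x) * (starRingEnd ℂ) (∑ m, b m * h m x) * w x ∂μ =
      ∑ l, ∑ m, a l * (starRingEnd ℂ) (b m) *
        ∫ x, h l x * (starRingEnd ℂ) (h m x) * w x ∂μ := by
  simp_rw [aux_expand]
  rw [integral_finsetSum _ fun l _ => integrable_finsetSum _ fun m _ => (hI l m).const_mul _]
  refine Finset.sum_congr rfl fun l _ => ?_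
  rw [integral_finsetSum _ fun m _ => (hI l m).const_mul _]
  refine Finset.sum_congr rfl fun m _ => ?_
  rw [integral_const_mul]

lemma aux_amgm {N : ℕ} (hN : 0 < N) (A : Matrix (Fin N) (Fin N) ℂ) (hA : A.PosSemidef)
    (t : ℝ) (ht : A.trace = ((N * t : ℝ) : ℂ)) :
    ∃ d : ℝ, A.det = (d : ℂ) ∧ d ≤ t ^ N := by
  have hN' : (0 : ℝ) < N := by exact_mod_cast hN
  refine ⟨∏ i, hA.isHermitian.eigenvalues i, ?_, ?_⟩
  · rw [hA.isHermitian.det_eq_prod_eigenvalues]; simp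
  · have h0 : ∀ i, 0 ≤ hA.isHermitian.eigenvalues i := hA.eigenvalues_nonneg
    have htr : ∑ i, hA.isHermitian.eigenvalues i = N * t := by
      have := hA.isHermitian.trace_eq_sum_eigenvalues
      rw [ht] at this
      apply Complex.ofReal_injective
      rw [this]; simp
    have h := Real.geom_mean_le_arith_mean Finset.univ (fun _ => (1 : ℝ))
      hA.isHermitian.eigenvalues (fun _ _ => zero_le_one) (by simpa using hN) (fun i _ => h0 i)
    simp only [Real.rpow_one, one_mul, Finset.sum_const, Finset.card_univ, Fintype.card_fin,
      nsmul_eq_mul, mul_one] at h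
    rw [htr, mul_div_cancel_left₀ _ hN'.ne'] at h
    have hp : 0 ≤ ∏ i, hA.isHermitian.eigenvalues i := Finset.prod_nonneg fun i _ => h0 i
    have h2 := pow_le_pow_left₀ (Real.rpow_nonneg hp _) h N
    rwa [Real.rpow_inv_natCast_pow hp hN.ne'] at h2

lemma aux_posSemidef {X : Type*} [MeasurableSpace X] (μ : Measure X) {N : ℕ}
    (h : Fin N → X → ℂ) (w : X → ℝ) (hw : ∀ x, 0 ≤ w x)
    (hI : ∀ i j, Integrable (fun x => h i x * (starRingEnd ℂ) (h j x) * (w x : ℂ)) μ) :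
    (Matrix.of fun i j => ∫ x, h i x * (starRingEnd ℂ) (h j x) * (w x : ℂ) ∂μ).PosSemidef := by
  refine Matrix.PosSemidef.of_dotProduct_mulVec_nonneg ?_ ?_
  · ext i j
    simp only [Matrix.conjTranspose_apply, Matrix.of_apply]
    rw [← starRingEnd_apply, ← integral_conj]
    congr 1; ext x; simp only [map_mul, Complex.conj_conj, Complex.conj_ofReal]; ring
  · intro y
    have key := aux_integral μ h (fun x => (w x : ℂ)) (fun i => star (y i)) (fun i => star (y i)) hI
    have : star y ⬝ᵥ ((Matrix.of fun i j => ∫ x, h i x * (starRingEnd ℂ) (h j x) * (w x : ℂ) ∂μ) *ᵥ y)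
      = ∫ x, (((‖∑ l, star (y l) * h l x‖ ^ 2 * w x : ℝ)) : ℂ) ∂μ := by
      have e : ∀ x, (((‖∑ l, star (y l) * h l x‖ ^ 2 * w x : ℝ)) : ℂ) =
        (∑ l, star (y l) * h l x) * (starRingEnd ℂ) (∑ m, star (y m) * h m x) * (w x : ℂ) := by
        intro x; rw [Complex.mul_conj']; push_cast; rfl
      simp_rw [e]
      rw [key]
      simp only [dotProduct, mulVec, Finset.mul_sum, Matrix.of_apply, Pi.star_apply]
      refine Finset.sum_congr rfl fun l _ => Finset.sum_congr rfl fun m _ => ?_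
      rw [starRingEnd_apply, star_star]; ring
    rw [this, integral_complex_ofReal]
    exact_mod_cast integral_nonneg fun x => mul_nonneg (by positivity) (hw x)



/-- Trivialized form of the second inequality in the proof of Proposition 3.1:
the Gram matrix `G'` of the `fᵢ` weighted by `e^{-(k+γ)u_g - (1-γ)v}` is well defined
and satisfies `det G' ≤ |det C|⁻² · c^N`. -/
theorem gram_det_le_inv_det_sq_mul_mass_pow
    {X : Type*} [MeasurableSpace X] (μ₀ : Measure X)
    (γ k : ℝ) (hγ : 0 < γ) (hk : 0 < k)
    (N : ℕ) (hN : 0 < N)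
    (f : Fin N → X → ℂ) (hf : ∀ i, Measurable (f i))
    (v : X → ℝ) (hv : Measurable v)
    (C : Matrix (Fin N) (Fin N) ℂ) (hC : IsUnit C.det)
    (g : Fin N → X → ℂ) (hg : g = fun i x => ∑ l, C i l * f l x)
    (ρg : X → ℝ) (hρg : ρg = fun x => (N : ℝ)⁻¹ * ∑ i, ‖g i x‖ ^ 2)
    (hpos : ∀ᵐ x ∂μ₀, 0 < ρg x)
    (ug : X → ℝ) (hug : ug = fun x => k⁻¹ * Real.log (ρg x))
    (c : ℝ≥0∞)
    (hc : c = ∫⁻ x, ENNReal.ofReal (Real.exp (-(γ * ug x + (1 - γ) * v x))) ∂μ₀)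
    (hctop : c < ⊤)
    (G' : Matrix (Fin N) (Fin N) ℂ)
    (hG' : G' = Matrix.of fun i j =>
      ∫ x, f i x * (starRingEnd ℂ) (f j x) *
        (Real.exp (-(k + γ) * ug x - (1 - γ) * v x) : ℂ) ∂μ₀) :
    (∀ i j, Integrable (fun x => f i x * (starRingEnd ℂ) (f j x) *
        (Real.exp (-(k + γ) * ug x - (1 - γ) * v x) : ℂ)) μ₀) ∧
    ∃ d : ℝ, G'.det = (d : ℂ) ∧ d ≤ (‖C.det‖ ^ 2)⁻¹ * c.toReal ^ N := by

  have hN' : (0 : ℝ) < N := by exact_mod_cast hN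
  set w : X → ℝ := fun x => Real.exp (-(k + γ) * ug x - (1 - γ) * v x) with hw
  set E : X → ℝ := fun x => Real.exp (-(γ * ug x + (1 - γ) * v x)) with hE
  have hgm : ∀ i, Measurable (g i) := by
    intro i; rw [hg]; fun_prop
  have hρm : Measurable ρg := by
    rw [hρg]; fun_prop
  have hum : Measurable ug := by
    rw [hug]; fun_prop
  have hwm : Measurable w := by fun_prop
  have hEm : Measurable E := by fun_prop
  have hEI : Integrable E μ₀ := by
    refine ⟨hEm.aestronglyMeasurable, ?_⟩
    rw [hasFiniteIntegral_iff_ofReal (Filter.Eventually.of_forall fun x => (Real.exp_pos _).le)]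
    rw [← hc]; exact hctop
  have hEint : ∫ x, E x ∂μ₀ = c.toReal := by
    rw [integral_eq_lintegral_of_nonneg_ae
      (Filter.Eventually.of_forall fun x => (Real.exp_pos _).le) hEm.aestronglyMeasurable, hc]
  have hw0 : ∀ x, 0 ≤ w x := fun x => (Real.exp_pos _).le
  have hsum : ∀ᵐ x ∂μ₀, (∑ i, ‖g i x‖ ^ 2) * w x = N * E x := by
    filter_upwards [hpos] with x hx
    have h1 : ∑ i, ‖g i x‖ ^ 2 = N * ρg x := by
      rw [hρg]; simp only; rw [mul_inv_cancel_left₀ hN'.ne']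
    have h2 : ρg x = Real.exp (k * ug x) := by
      rw [hug]; simp only; rw [mul_inv_cancel_left₀ hk.ne', Real.exp_log hx]
    rw [h1, mul_assoc, h2, hw, hE]
    simp only
    rw [← Real.exp_add]; ring_nf
  have hgI : ∀ i j, Integrable (fun x => g i x * (starRingEnd ℂ) (g j x) * (w x : ℂ)) μ₀ := by
    intro i j
    refine Integrable.mono' (hEI.const_mul (N : ℝ)) ?_ ?_
    · have := hgm i
      have := hgm j
      exact (((hgm i).mul (Complex.continuous_conj.measurable.comp (hgm j))).mul
        (Complex.measurable_ofReal.comp hwm)).aestronglyMeasurable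
    · filter_upwards [hsum] with x hx
      rw [← hx, norm_mul, norm_mul, RCLike.norm_conj, Complex.norm_real, Real.norm_of_nonneg (hw0 x)]
      refine mul_le_mul_of_nonneg_right ?_ (hw0 x)
      have hi := Finset.single_le_sum (f := fun i => ‖g i x‖ ^ 2) (fun i _ => by positivity)
        (Finset.mem_univ i)
      have hj := Finset.single_le_sum (f := fun i => ‖g i x‖ ^ 2) (fun i _ => by positivity)
        (Finset.mem_univ j)
      nlinarith [sq_nonneg (‖g i x‖ - ‖g j x‖)]
  have hfg : ∀ i x, f i x = ∑ l, C⁻¹ i l * g l x := by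
    intro i x
    have h1 : (fun l => g l x) = C *ᵥ (fun l => f l x) := by
      rw [hg]; rfl
    have h2 : C⁻¹ *ᵥ (fun l => g l x) = fun l => f l x := by
      rw [h1, Matrix.mulVec_mulVec, Matrix.nonsing_inv_mul _ hC, Matrix.one_mulVec]
    exact (congrFun h2 i).symm
  have hfI : ∀ i j, Integrable (fun x => f i x * (starRingEnd ℂ) (f j x) * (w x : ℂ)) μ₀ := by
    intro i j
    simp_rw [hfg]
    exact aux_integrable μ₀ g (fun x => (w x : ℂ)) _ _ hgI
  refine ⟨hfI, ?_⟩
  set H : Matrix (Fin N) (Fin N) ℂ :=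
    Matrix.of fun i j => ∫ x, g i x * (starRingEnd ℂ) (g j x) * (w x : ℂ) ∂μ₀ with hH
  have hHps : H.PosSemidef := aux_posSemidef μ₀ g w hw0 hgI
  have hHG : H = C * G' * Cᴴ := by
    ext i j
    rw [hH, hG']
    simp only [Matrix.of_apply, Matrix.mul_apply, Matrix.conjTranspose_apply, Finset.sum_mul]
    have := aux_integral μ₀ f (fun x => (w x : ℂ)) (C i) (C j) hfI
    rw [hg]
    simp only
    rw [this, Finset.sum_comm]
    refine Finset.sum_congr rfl fun l _ => Finset.sum_congr rfl fun m _ => ?_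
    rw [starRingEnd_apply]; ring
  have htr : H.trace = ((N * c.toReal : ℝ) : ℂ) := by
    rw [← hEint, ← integral_const_mul, ← integral_complex_ofReal, Matrix.trace]
    simp only [Matrix.diag_apply, hH, Matrix.of_apply]
    rw [← integral_finsetSum _ fun i _ => hgI i i]
    refine integral_congr_ae ?_
    filter_upwards [hsum] with x hx
    rw [← hx]
    push_cast
    rw [Finset.sum_mul]
    refine Finset.sum_congr rfl fun i _ => ?_
    rw [Complex.mul_conj']
  obtain ⟨d, hd, hdle⟩ := aux_amgm hN H hHps _ htr
  have hC0 : 0 < ‖C.det‖ ^ 2 := by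
    have := norm_pos_iff.mpr hC.ne_zero
    positivity
  refine ⟨(‖C.det‖ ^ 2)⁻¹ * d, ?_, mul_le_mul_of_nonneg_left hdle (inv_nonneg.mpr hC0.le)⟩
  have hdet : (d : ℂ) = ((‖C.det‖ ^ 2 : ℝ) : ℂ) * G'.det := by
    rw [← hd, hHG, Matrix.det_mul, Matrix.det_mul, Matrix.det_conjTranspose, ← starRingEnd_apply]
    push_cast
    rw [← Complex.mul_conj']; ring
  rw [Complex.ofReal_mul, hdet, Complex.ofReal_inv, inv_mul_cancel_left₀]
  exact_mod_cast hC0.ne'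
end
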